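/- arXiv:1206.2248 — 2 statements merged into one kernel-verified Lean document; each statement's English description precedes it below -/
import Mathlib

section
/- Under the stated hypotheses, the Wald decision boundary parameters satisfy a < 0 and 0 < b < 1, and consequently the safety zone s_safe = -a/b is strictly positive. -/
/-!
The hypotheses say exactly that `1 < q < 2`: the base `(1 - βl) / αl` exceeds `1`, and it is
smaller than `2 ^ S`. With `π₀ = 1/2` and `π₁ = q/2`, put `u = log q > 0` and
`v = -log (2 - q) > 0`. Then `D = u + v` and `b = v / (u + v)` lies in `(0, 1)`, while the numerator
of `a` is the logarithm of a number in `(0, 1)`, so `a < 0`.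
-/

/-- Under the CVST hypotheses, the Wald decision boundary
parameters satisfy `a < 0` and `0 < b < 1`, and consequently the safety zone
`s_safe = -a/b` is strictly positive. -/
theorem cvst_boundary_params
    (αl βl : ℝ) (S : ℕ)
    (hα0 : 0 < αl) (hα1 : αl < 1) (hβ0 : 0 < βl) (hβ1 : βl < 1)
    (hβα : βl < 1 - αl) (hS : 0 < S)
    (hSlog : Real.log ((1 - βl) / αl) < (S : ℝ) * Real.log 2)
    (q π₀ π₁ D a b ssafe : ℝ)
    (hq : q = ((1 - βl) / αl) ^ ((S : ℝ)⁻¹))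
    (hπ₀ : π₀ = 1 / 2) (hπ₁ : π₁ = q / 2)
    (hD : D = Real.log (π₁ / π₀) - Real.log ((1 - π₁) / (1 - π₀)))
    (ha : a = Real.log (βl / (1 - αl)) / D)
    (hb : b = Real.log ((1 - π₀) / (1 - π₁)) / D)
    (hsafe : ssafe = -a / b) :
    a < 0 ∧ 0 < b ∧ b < 1 ∧ 0 < ssafe := by
  have hx1 : 1 < (1 - βl) / αl := by
    rw [lt_div_iff₀ hα0]; linarith
  have hS' : (0 : ℝ) < S := by exact_mod_cast hS
  have hq1 : 1 < q := hq ▸ Real.one_lt_rpow hx1 (inv_pos.mpr hS')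
  have hlogq : Real.log q < Real.log 2 := by
    rw [hq, Real.log_rpow (by linarith), inv_mul_lt_iff₀ hS']
    exact hSlog
  have hq2 : q < 2 := (Real.log_lt_log_iff (by linarith) (by norm_num)).mp hlogq
  have hu : 0 < Real.log q := Real.log_pos hq1
  have hv : Real.log (2 - q) < 0 := Real.log_neg (by linarith) (by linarith)
  have e1 : π₁ / π₀ = q := by rw [hπ₁, hπ₀]; ring
  have e2 : (1 - π₁) / (1 - π₀) = 2 - q := by rw [hπ₁, hπ₀]; ring
  have e3 : Real.log ((1 - π₀) / (1 - π₁)) = -Real.log (2 - q) := by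
    rw [← e2, ← Real.log_inv, inv_div]
  rw [e1, e2] at hD
  rw [e3] at hb
  have hDpos : 0 < D := by linarith
  have ha0 : a < 0 := by
    rw [ha]
    have h1 : 0 < 1 - αl := by linarith
    exact div_neg_of_neg_of_pos
      (Real.log_neg (div_pos hβ0 h1) ((div_lt_one h1).mpr hβα)) hDpos
  have hb0 : 0 < b := hb ▸ div_pos (by linarith) hDpos
  have hb1 : b < 1 := by
    rw [hb, div_lt_one hDpos]; linarith
  exact ⟨ha0, hb0, hb1, hsafe ▸ div_pos (by linarith) hb0⟩
end

section
/- (Safety Zone Lemma.) Under the stated hypotheses, for every real s with 0 ≤ s < s_safe one has a + b·s < 0; consequently, for every sequence T₁, T₂, … ∈ {0,1} and every natural number s with s < s_safe, ∑_{i=1}^{s} T_i > a + b·s, i.e., the CVST sequential test cannot drop any configuration at a step strictly before s_safe (the probability of a premature drop before the safety zone is zero). -/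
/-! The boundary `a + b·s` is an affine function of `s` vanishing at `ssafe = -a / b`, so it is
negative before `ssafe` as soon as its slope `b` is positive. The lower bound `1 < (1 - βl) / αl`
and the hypothesis on `S` give `1 < q < 2`, hence `1/2 < π₁ < 1`; both the numerator and the
denominator `D` of `b` are then positive. A cumulative sum of a binary trace is nonnegative, so it
lies above the boundary. -/


/-- **Safety Zone Lemma.** For every real `s` with `0 ≤ s < s_safe`
one has `a + b·s < 0`; consequently, for every binary trace `T` and every natural
number `s < s_safe`, `∑_{i=1}^{s} T_i > a + b·s`, i.e. the CVST sequential test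
cannot drop any configuration strictly before the safety zone. -/
theorem cvst_safety_zone
    (αl βl : ℝ) (S : ℕ)
    (hα0 : 0 < αl) (hα1 : αl < 1) (hβ0 : 0 < βl) (hβ1 : βl < 1)
    (hβα : βl < 1 - αl) (hS : 0 < S)
    (hSlog : Real.log ((1 - βl) / αl) < (S : ℝ) * Real.log 2)
    (q π₀ π₁ D a b ssafe : ℝ)
    (hq : q = ((1 - βl) / αl) ^ ((S : ℝ)⁻¹))
    (hπ₀ : π₀ = 1 / 2) (hπ₁ : π₁ = q / 2)
    (hD : D = Real.log (π₁ / π₀) - Real.log ((1 - π₁) / (1 - π₀)))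
    (ha : a = Real.log (βl / (1 - αl)) / D)
    (hb : b = Real.log ((1 - π₀) / (1 - π₁)) / D)
    (hsafe : ssafe = -a / b) :
    (∀ s : ℝ, 0 ≤ s → s < ssafe → a + b * s < 0) ∧
    (∀ T : ℕ → ℝ, (∀ i, T i = 0 ∨ T i = 1) →
      ∀ s : ℕ, (s : ℝ) < ssafe →
        a + b * (s : ℝ) < ∑ i ∈ Finset.range s, T i) := by
  have hR : 1 < (1 - βl) / αl := by
    rw [lt_div_iff₀ hα0]
    linarith
  have hSpos : (0 : ℝ) < S := by exact_mod_cast hS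
  have hq1 : 1 < q := by
    rw [hq]
    exact Real.one_lt_rpow hR (inv_pos.mpr hSpos)
  have hq2 : q < 2 := by
    rw [← Real.log_lt_log_iff (by linarith) two_pos, hq, Real.log_rpow (by linarith),
      inv_mul_lt_iff₀ hSpos]
    exact hSlog
  subst hπ₀ hπ₁
  have hDpos : 0 < D := by
    have h1 : 0 < Real.log (q / 2 / (1 / 2)) := by
      apply Real.log_pos
      rw [lt_div_iff₀ (by norm_num)]
      linarith
    have h2 : Real.log ((1 - q / 2) / (1 - 1 / 2)) < 0 := by
      apply Real.log_neg
      · apply div_pos <;> linarith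
      · rw [div_lt_one (by norm_num)]
        linarith
    linarith
  have hbpos : 0 < b := by
    rw [hb]
    refine div_pos (Real.log_pos ?_) hDpos
    rw [lt_div_iff₀ (by linarith)]
    linarith
  have key : ∀ s : ℝ, s < ssafe → a + b * s < 0 := by
    intro s hs
    rw [hsafe, lt_div_iff₀ hbpos] at hs
    linarith
  refine ⟨fun s _ hs => key s hs, fun T hT s hs => (key s hs).trans_le ?_⟩
  refine Finset.sum_nonneg fun i _ => ?_
  rcases hT i with h | h <;> rw [h]
  exact zero_le_one
end
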